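/- Fix τ ∈ ℍ, n₀,n₁,n₂,n₃, A, B ∈ ℂ and p ∈ ℂ with p ∉ (1/2)Λ_τ, and let I(z;τ) be the generalized Lamé potential. Suppose 2n_i ∉ ℤ for some i ∈ {0,1,2,3}. If Φ is a meromorphic function on ℂ that is even (Φ(−z) = Φ(z)), elliptic with periods 1 and τ, and satisfies the second symmetric power equation Φ‴(z) − 4I(z;τ)Φ′(z) − 2I′(z;τ)Φ(z) = 0 away from the singular set, then Φ ≡ 0. -/

import Mathlib

open Complex Filter Topology Asymptotics

noncomputable section

/-- membership in the lattice `Λ_τ = ℤ + τℤ`. -/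
def InLattice (τ z : ℂ) : Prop := ∃ m n : ℤ, z = (m : ℂ) + (n : ℂ) * τ

/-- the half-period generators `ω₀ = 0, ω₁ = 1, ω₂ = τ, ω₃ = 1 + τ`. -/
def halfp (τ : ℂ) : Fin 4 → ℂ := ![0, 1, τ, 1 + τ]

/-- the Weierstrass elliptic function `℘(z|τ)`. -/
def wp (τ z : ℂ) : ℂ :=
  z⁻¹ ^ 2 + ∑' w : {w : ℤ × ℤ // w ≠ 0},
    ((z - ((w.1.1 : ℂ) + (w.1.2 : ℂ) * τ))⁻¹ ^ 2 - ((w.1.1 : ℂ) + (w.1.2 : ℂ) * τ)⁻¹ ^ 2)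

/-- `℘′(z|τ)`, the `z`-derivative of `℘`. -/
def wpd (τ z : ℂ) : ℂ := deriv (wp τ) z

/-- `℘″(z|τ)`. -/
def wpdd (τ z : ℂ) : ℂ := deriv (wpd τ) z

def e1 (τ : ℂ) : ℂ := wp τ (1 / 2)
def e2 (τ : ℂ) : ℂ := wp τ (τ / 2)
def e3 (τ : ℂ) : ℂ := wp τ ((1 + τ) / 2)

def g2 (τ : ℂ) : ℂ := -4 * (e1 τ * e2 τ + e1 τ * e3 τ + e2 τ * e3 τ)

/-- `zeta` is the Weierstrass zeta function: for each `τ ∈ ℍ`, `zeta τ` is odd, satisfies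
`∂ζ/∂z = -℘` off the lattice, and `ζ(z|τ) - 1/z → 0` as `z → 0`. -/
def IsWeierstrassZeta (zeta : ℂ → ℂ → ℂ) : Prop :=
  ∀ τ : ℂ, 0 < τ.im →
    (∀ z : ℂ, zeta τ (-z) = - zeta τ z) ∧
    (∀ z : ℂ, ¬ InLattice τ z → HasDerivAt (zeta τ) (- wp τ z) z) ∧
    Tendsto (fun z => zeta τ z - z⁻¹) (𝓝[≠] (0 : ℂ)) (𝓝 0)

/-- `eta1 τ = ζ(z+1|τ) - ζ(z|τ)` is the first quasi-period. -/
def IsEta1 (zeta : ℂ → ℂ → ℂ) (eta1 : ℂ → ℂ) : Prop :=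
  ∀ τ : ℂ, 0 < τ.im → ∀ z : ℂ, ¬ InLattice τ z →
    eta1 τ = zeta τ (z + 1) - zeta τ z

/-- `eta2 τ = ζ(z+τ|τ) - ζ(z|τ)` is the second quasi-period. -/
def IsEta2 (zeta : ℂ → ℂ → ℂ) (eta2 : ℂ → ℂ) : Prop :=
  ∀ τ : ℂ, 0 < τ.im → ∀ z : ℂ, ¬ InLattice τ z →
    eta2 τ = zeta τ (z + τ) - zeta τ z

/-- `sigma` is the Weierstrass sigma function: entire, odd, with
`∂/∂z log σ = ζ` off the lattice and `σ(z|τ)/z → 1` as `z → 0`. -/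
def IsWeierstrassSigma (zeta sigma : ℂ → ℂ → ℂ) : Prop :=
  ∀ τ : ℂ, 0 < τ.im →
    (∀ z : ℂ, sigma τ (-z) = - sigma τ z) ∧
    Differentiable ℂ (sigma τ) ∧
    (∀ z : ℂ, ¬ InLattice τ z → HasDerivAt (sigma τ) (zeta τ z * sigma τ z) z) ∧
    Tendsto (fun z => sigma τ z / z) (𝓝[≠] (0 : ℂ)) (𝓝 1)

/-- the Hamiltonian system (142) for `(p(τ), A(τ))` on `V`. -/
def HamSystem (n : Fin 4 → ℂ) (zeta : ℂ → ℂ → ℂ) (eta1 : ℂ → ℂ)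
    (V : Set ℂ) (p A : ℂ → ℂ) : Prop :=
  ∀ τ ∈ V,
    HasDerivAt p ((-Complex.I / (4 * (Real.pi : ℂ))) *
      (2 * A τ - zeta τ (2 * p τ) + 2 * p τ * eta1 τ)) τ ∧
    HasDerivAt A ((Complex.I / (4 * (Real.pi : ℂ))) *
      ((2 * wp τ (2 * p τ) + 2 * eta1 τ) * A τ - (3 / 2) * wpd τ (2 * p τ)
        - ∑ k : Fin 4, n k * (n k + 1) * wpd τ (p τ + halfp τ k / 2))) τ

/-- the generalized Lamé potential `I(z;τ)`. -/
def Ipot (n : Fin 4 → ℂ) (zeta : ℂ → ℂ → ℂ) (A B p τ z : ℂ) : ℂ :=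
  (∑ k : Fin 4, n k * (n k + 1) * wp τ (z + halfp τ k / 2))
    + (3 / 4) * (wp τ (z + p) + wp τ (z - p))
    + A * (zeta τ (z + p) - zeta τ (z - p)) + B

end

/-- The period pair `(1, τ)` attached to a point of the upper half-plane. -/
noncomputable def upperPeriodPair (τ : ℂ) (hτ : 0 < τ.im) : PeriodPair where
  ω₁ := 1
  ω₂ := τ
  indep := by
    rw [LinearIndependent.pair_iff]
    intro s t h
    have him := congrArg Complex.im h
    have ht : t = 0 := by simpa [hτ.ne'] using him
    refine ⟨?_, ht⟩
    simpa [ht] using congrArg Complex.re h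

theorem inLattice_iff_mem {τ : ℂ} (hτ : 0 < τ.im) {z : ℂ} :
    InLattice τ z ↔ z ∈ (upperPeriodPair τ hτ).lattice := by
  rw [PeriodPair.mem_lattice]
  simp only [InLattice, upperPeriodPair, mul_one, eq_comm]

theorem even_of_inLattice_half {τ : ℂ} (hτ : 0 < τ.im) {a b : ℤ}
    (h : InLattice τ (((a : ℂ) + b * τ) / 2)) : Even a ∧ Even b := by
  obtain ⟨m, n, h⟩ := h
  have key := LinearIndependent.pair_iff.mp (upperPeriodPair τ hτ).indep
    ((a - 2 * m : ℤ) : ℝ) ((b - 2 * n : ℤ) : ℝ) (by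
      simp only [upperPeriodPair, Complex.real_smul, Complex.ofReal_intCast]
      push_cast
      linear_combination 2 * h)
  have h1 : a - 2 * m = 0 := by exact_mod_cast key.1
  have h2 : b - 2 * n = 0 := by exact_mod_cast key.2
  exact ⟨⟨m, by omega⟩, ⟨n, by omega⟩⟩

theorem not_inLattice_half_sub {τ : ℂ} (hτ : 0 < τ.im) {i k : Fin 4} (hik : k ≠ i) :
    ¬ InLattice τ (-(halfp τ i / 2) + halfp τ k / 2) := by
  intro h
  have key (j : Fin 4) : halfp τ j =
      ((![0, 1, 0, 1] j : ℤ) : ℂ) + ((![0, 0, 1, 1] j : ℤ) : ℂ) * τ := by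
    fin_cases j <;> simp [halfp]
  have h' := even_of_inLattice_half hτ (a := ![0, 1, 0, 1] k - ![0, 1, 0, 1] i)
    (b := ![0, 0, 1, 1] k - ![0, 0, 1, 1] i) (by
      convert h using 1
      rw [key i, key k]
      push_cast
      ring)
  revert h' hik
  clear h key
  revert i k
  decide

theorem inLattice_halfp (τ : ℂ) (i : Fin 4) : InLattice τ (halfp τ i) := by
  fin_cases i
  · exact ⟨0, 0, by simp [halfp]⟩
  · exact ⟨1, 0, by simp [halfp]⟩
  · exact ⟨0, 1, by simp [halfp]⟩
  · exact ⟨1, 1, by simp [halfp]⟩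

theorem eventually_not_inLattice {τ : ℂ} (hτ : 0 < τ.im) {z : ℂ} (hz : ¬ InLattice τ z) :
    ∀ᶠ w in 𝓝 z, ¬ InLattice τ w := by
  simp only [inLattice_iff_mem hτ] at hz ⊢
  exact (upperPeriodPair τ hτ).isClosed_lattice.isOpen_compl.mem_nhds hz

theorem eventually_nhdsNE_not_inLattice {τ : ℂ} (hτ : 0 < τ.im) (z : ℂ) :
    ∀ᶠ w in 𝓝[≠] z, ¬ InLattice τ w := by
  filter_upwards [self_mem_nhdsWithin, mem_nhdsWithin_of_mem_nhds
    ((upperPeriodPair τ hτ).compl_lattice_sdiff_singleton_mem_nhds z)] with w hw hw'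
  rw [inLattice_iff_mem hτ]
  exact fun h => hw' ⟨h, hw⟩

theorem wp_eq_weierstrassPExcept_add {τ : ℂ} (hτ : 0 < τ.im) (z : ℂ) :
    wp τ z = (upperPeriodPair τ hτ).weierstrassPExcept 0 z + z⁻¹ ^ 2 := by
  set L := upperPeriodPair τ hτ
  rw [wp, add_comm, PeriodPair.weierstrassPExcept, ← L.latticeEquivProd.symm.toEquiv.tsum_eq]
  congr 1
  refine (tsum_subtype {w : ℤ × ℤ | w ≠ 0} fun w : ℤ × ℤ =>
    (z - ((w.1 : ℂ) + (w.2 : ℂ) * τ))⁻¹ ^ 2 - ((w.1 : ℂ) + (w.2 : ℂ) * τ)⁻¹ ^ 2).trans ?_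
  refine tsum_congr fun w => ?_
  have hval : ((L.latticeEquivProd.symm w : L.lattice) : ℂ) = w.1 + w.2 * τ := by
    rw [L.latticeEquiv_symm_apply]
    simp [L, upperPeriodPair]
  by_cases hw : w = 0
  · simp [hw]
  · have hne : ((L.latticeEquivProd.symm w : L.lattice) : ℂ) ≠ 0 := by simpa using hw
    have hmem : w ∈ {w : ℤ × ℤ | w ≠ 0} := hw
    simp only [LinearEquiv.coe_toEquiv]
    rw [Set.indicator_of_mem hmem, if_neg hne, hval]
    simp

theorem analyticAt_wp {τ : ℂ} (hτ : 0 < τ.im) {z : ℂ} (hz : ¬ InLattice τ z) :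
    AnalyticAt ℂ (wp τ) z := by
  have h0 : z ≠ 0 := by
    rintro rfl
    exact hz ⟨0, 0, by simp⟩
  have hmem : z ∈ (((upperPeriodPair τ hτ).lattice : Set ℂ) \ {0})ᶜ :=
    fun h => hz ((inLattice_iff_mem hτ).2 h.1)
  rw [show wp τ = fun w => (upperPeriodPair τ hτ).weierstrassPExcept 0 w + w⁻¹ ^ 2 from
    funext (wp_eq_weierstrassPExcept_add hτ)]
  exact ((upperPeriodPair τ hτ).analyticOnNhd_weierstrassPExcept 0 z hmem).add
    ((analyticAt_id.inv h0).pow 2)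

theorem IsWeierstrassZeta.analyticAt {zeta : ℂ → ℂ → ℂ} (hzeta : IsWeierstrassZeta zeta)
    {τ : ℂ} (hτ : 0 < τ.im) {z : ℂ} (hz : ¬ InLattice τ z) : AnalyticAt ℂ (zeta τ) z := by
  rw [Complex.analyticAt_iff_eventually_differentiableAt]
  filter_upwards [eventually_not_inLattice hτ hz] with w hw
  exact ((hzeta τ hτ).2.1 w hw).differentiableAt

/-- Near `-ω_i/2` the potential is `(z + ω_i/2)⁻²` times an analytic function with value
`n_i (n_i + 1)`. -/
theorem exists_analyticAt_Ipot_eq {τ : ℂ} (hτ : 0 < τ.im) (n : Fin 4 → ℂ) (A B : ℂ) {p : ℂ}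
    {zeta : ℂ → ℂ → ℂ} (hzeta : IsWeierstrassZeta zeta) (i : Fin 4)
    (hadd : ¬ InLattice τ (-(halfp τ i / 2) + p)) (hsub : ¬ InLattice τ (-(halfp τ i / 2) - p)) :
    ∃ h : ℂ → ℂ, AnalyticAt ℂ h (-(halfp τ i / 2)) ∧
      h (-(halfp τ i / 2)) = n i * (n i + 1) ∧
      Ipot n zeta A B p τ =ᶠ[𝓝[≠] (-(halfp τ i / 2))]
        fun z => (z - -(halfp τ i / 2)) ^ (-2 : ℤ) * h z := by
  set z₀ := -(halfp τ i / 2) with hz₀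
  set E := (upperPeriodPair τ hτ).weierstrassPExcept 0
  have hcomp {f : ℂ → ℂ} {c : ℂ} (hf : AnalyticAt ℂ f (z₀ + c)) :
      AnalyticAt ℂ (fun z => f (z + c)) z₀ :=
    hf.comp (f := fun z => z + c) (by fun_prop)
  have hE : AnalyticAt ℂ (fun z => E (z + halfp τ i / 2)) z₀ := hcomp (by
    rw [hz₀, neg_add_cancel]
    exact (upperPeriodPair τ hτ).analyticAt_weierstrassPExcept 0)
  have hsum : AnalyticAt ℂ (fun z => ∑ k ∈ Finset.univ.erase i,
      n k * (n k + 1) * wp τ (z + halfp τ k / 2)) z₀ :=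
    Finset.analyticAt_fun_sum _ fun k hk => analyticAt_const.mul
      (hcomp (analyticAt_wp hτ (not_inLattice_half_sub hτ (Finset.ne_of_mem_erase hk))))
  have hsub' : ¬ InLattice τ (z₀ + -p) := by rwa [← sub_eq_add_neg]
  have hrest : AnalyticAt ℂ (fun z => (3 / 4) * (wp τ (z + p) + wp τ (z + -p))
      + A * (zeta τ (z + p) - zeta τ (z + -p)) + B) z₀ :=
    ((analyticAt_const.mul ((hcomp (analyticAt_wp hτ hadd)).add
      (hcomp (analyticAt_wp hτ hsub')))).add (analyticAt_const.mul
      ((hcomp (hzeta.analyticAt hτ hadd)).sub (hcomp (hzeta.analyticAt hτ hsub'))))).add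
      analyticAt_const
  refine ⟨fun z => n i * (n i + 1) + (z - z₀) ^ 2 *
    (n i * (n i + 1) * E (z + halfp τ i / 2) + (∑ k ∈ Finset.univ.erase i,
      n k * (n k + 1) * wp τ (z + halfp τ k / 2)) + ((3 / 4) * (wp τ (z + p) + wp τ (z + -p))
      + A * (zeta τ (z + p) - zeta τ (z + -p)) + B)), ?_, by simp, ?_⟩
  · exact analyticAt_const.add (((analyticAt_id.sub analyticAt_const).pow 2).mul
      (((analyticAt_const.mul hE).add hsum).add hrest))
  · filter_upwards [self_mem_nhdsWithin] with z hz
    have hz' : z - z₀ ≠ 0 := sub_ne_zero.2 hz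
    have hshift : z + halfp τ i / 2 = z - z₀ := by rw [hz₀]; ring
    rw [Ipot, ← Finset.add_sum_erase _ _ (Finset.mem_univ i),
      wp_eq_weierstrassPExcept_add hτ (z + halfp τ i / 2)]
    simp only [sub_eq_add_neg z p, hshift]
    rw [zpow_neg, show ((2 : ℤ)) = ((2 : ℕ) : ℤ) from rfl, zpow_natCast]
    field_simp
    ring

/-- Differentiating a Laurent-type factorization. -/
theorem deriv_eventuallyEq_zpow_mul {f g : ℂ → ℂ} {z₀ : ℂ} {k : ℤ} (hg : AnalyticAt ℂ g z₀)
    (hf : f =ᶠ[𝓝[≠] z₀] fun z => (z - z₀) ^ k * g z) :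
    deriv f =ᶠ[𝓝[≠] z₀] fun z => (z - z₀) ^ (k - 1) * (k * g z + (z - z₀) * deriv g z) := by
  filter_upwards [eventually_eventually_nhdsWithin.2 hf, self_mem_nhdsWithin,
    eventually_nhdsWithin_of_eventually_nhds hg.eventually_analyticAt] with z hz hne hgz
  have hne' : z - z₀ ≠ 0 := sub_ne_zero.2 hne
  have hz' : f =ᶠ[𝓝 z] fun z => (z - z₀) ^ k * g z := by
    rwa [isOpen_compl_singleton.nhdsWithin_eq hne] at hz
  rw [hz'.deriv_eq]
  have hd : HasDerivAt (fun z => (z - z₀) ^ k) (k * (z - z₀) ^ (k - 1)) z := by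
    simpa using (hasDerivAt_zpow k (z - z₀) (Or.inl hne')).comp_sub_const z z₀
  rw [(hd.fun_mul hgz.differentiableAt.hasDerivAt).deriv]
  have : (z - z₀) ^ k = (z - z₀) ^ (k - 1) * (z - z₀) := by
    rw [← zpow_add_one₀ hne', sub_add_cancel]
  rw [this]
  ring

theorem AnalyticAt.eq_zero_of_eventually_nhdsNE {g : ℂ → ℂ} {z₀ : ℂ} (hg : AnalyticAt ℂ g z₀)
    (h : ∀ᶠ z in 𝓝[≠] z₀, g z = 0) : g z₀ = 0 :=
  tendsto_nhds_unique (hg.continuousAt.tendsto.mono_left nhdsWithin_le_nhds)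
    (tendsto_const_nhds.congr' (h.mono fun _ hz => hz.symm))

/-- The order of a meromorphic function symmetric about `z₀` is even. -/
theorem even_of_symmetric_zpow_mul {f g : ℂ → ℂ} {z₀ : ℂ} {k : ℤ} (hg : AnalyticAt ℂ g z₀)
    (hg₀ : g z₀ ≠ 0) (hf : f =ᶠ[𝓝[≠] z₀] fun z => (z - z₀) ^ k * g z)
    (hsymm : ∀ z, f (2 * z₀ - z) = f z) : Even k := by
  by_contra hk
  rw [Int.not_even_iff_odd] at hk
  have hz₀ : 2 * z₀ - z₀ = z₀ := by ring
  have hrefl : Tendsto (fun z => 2 * z₀ - z) (𝓝[≠] z₀) (𝓝[≠] z₀) := by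
    refine tendsto_nhdsWithin_iff.2 ⟨?_, ?_⟩
    · have : Tendsto (fun z => 2 * z₀ - z) (𝓝 z₀) (𝓝 (2 * z₀ - z₀)) :=
        (continuous_const.sub continuous_id).tendsto z₀
      rw [hz₀] at this
      exact this.mono_left nhdsWithin_le_nhds
    · filter_upwards [self_mem_nhdsWithin] with z hz h
      rw [Set.mem_singleton_iff] at h
      exact hz (show z = z₀ by linear_combination -h)
  have hg' : AnalyticAt ℂ (fun z => g (2 * z₀ - z)) z₀ :=
    AnalyticAt.comp (g := g) (f := fun z => 2 * z₀ - z) (by rwa [hz₀]) (by fun_prop)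
  have h0 := (hg.add hg').eq_zero_of_eventually_nhdsNE (by
    filter_upwards [hf, hrefl.eventually hf, self_mem_nhdsWithin] with z h1 h2 hne
    have hne' : (z - z₀) ^ k ≠ 0 := zpow_ne_zero _ (sub_ne_zero.2 hne)
    rw [hsymm, h1, show 2 * z₀ - z - z₀ = -(z - z₀) by ring, hk.neg_zpow] at h2
    have : (z - z₀) ^ k * (g z + g (2 * z₀ - z)) = 0 := by linear_combination h2
    exact (mul_eq_zero.1 this).resolve_left hne')
  simp only [Pi.add_apply, hz₀] at h0
  exact hg₀ (by linear_combination h0 / 2)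

/-- The indicial equation of `Φ‴ - 4IΦ′ - 2I′Φ = 0` at a double pole of `I`. -/
theorem indicial_eq_zero {f g I h : ℂ → ℂ} {z₀ : ℂ} {k : ℤ} (hg : AnalyticAt ℂ g z₀)
    (hg₀ : g z₀ ≠ 0) (hf : f =ᶠ[𝓝[≠] z₀] fun z => (z - z₀) ^ k * g z)
    (hh : AnalyticAt ℂ h z₀) (hI : I =ᶠ[𝓝[≠] z₀] fun z => (z - z₀) ^ (-2 : ℤ) * h z)
    (heq : ∀ᶠ z in 𝓝[≠] z₀,
      deriv (deriv (deriv f)) z - 4 * I z * deriv f z - 2 * deriv I z * f z = 0) :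
    ((k : ℂ) - 1) * (k * (k - 2) - 4 * h z₀) = 0 := by
  have step {u : ℂ → ℂ} (c : ℂ) (hu : AnalyticAt ℂ u z₀) :
      AnalyticAt ℂ (fun z => c * u z + (z - z₀) * deriv u z) z₀ :=
    (analyticAt_const.mul hu).add ((analyticAt_id.sub analyticAt_const).mul hu.deriv)
  have hg1 := step (k : ℂ) hg
  have hf1 := deriv_eventuallyEq_zpow_mul hg hf
  have hg2 := step ((k - 1 : ℤ) : ℂ) hg1
  have hf2 := deriv_eventuallyEq_zpow_mul hg1 hf1
  have hg3 := step ((k - 1 - 1 : ℤ) : ℂ) hg2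
  have hf3 := deriv_eventuallyEq_zpow_mul hg2 hf2
  have hh1 := step ((-2 : ℤ) : ℂ) hh
  have hI1 := deriv_eventuallyEq_zpow_mul hh hI
  have h0 := ((hg3.sub ((analyticAt_const (v := (4 : ℂ))).mul (hh.mul hg1))).sub
    ((analyticAt_const (v := (2 : ℂ))).mul (hh1.mul hg))).eq_zero_of_eventually_nhdsNE (by
      filter_upwards [hf, hf1, hf3, hI, hI1, heq, self_mem_nhdsWithin] with z e0 e1 e3 i0 i1 e hne
      have hne' : z - z₀ ≠ 0 := sub_ne_zero.2 hne
      rw [e0, e1, e3, i0, i1] at e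
      have p1 : (z - z₀) ^ (k - 1) = (z - z₀) ^ (k - 1 - 1 - 1) * (z - z₀) ^ 2 := by
        rw [← zpow_natCast, ← zpow_add₀ hne']; congr 1; push_cast; ring
      have p0 : (z - z₀) ^ k = (z - z₀) ^ (k - 1 - 1 - 1) * (z - z₀) ^ 3 := by
        rw [← zpow_natCast, ← zpow_add₀ hne']; congr 1; push_cast; ring
      have q2 : (z - z₀) ^ (-2 : ℤ) * (z - z₀) ^ 2 = 1 := by
        rw [← zpow_natCast, ← zpow_add₀ hne']; simp
      have q3 : (z - z₀) ^ (-2 - 1 : ℤ) * (z - z₀) ^ 3 = 1 := by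
        rw [← zpow_natCast, ← zpow_add₀ hne']; simp
      rw [p1, p0] at e
      refine (mul_eq_zero.1 ?_).resolve_left (zpow_ne_zero (k - 1 - 1 - 1) hne')
      simp only [Pi.sub_apply, Pi.mul_apply]
      set P := (z - z₀) ^ (k - 1 - 1 - 1)
      linear_combination e + 4 * P * h z * (k * g z + (z - z₀) * deriv g z) * q2
        + 2 * P * (((-2 : ℤ) : ℂ) * h z + (z - z₀) * deriv h z) * g z * q3)
  simp only [Pi.sub_apply, Pi.mul_apply, sub_self, zero_mul, add_zero] at h0
  push_cast at h0
  refine (mul_eq_zero.1 ?_).resolve_right hg₀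
  linear_combination h0

/-- uniqueness of even elliptic solutions of the second symmetric power
equation, cf. the Corollary after Theorem 2.6: if `2n_i ∉ ℤ` for some `i`, then any even
elliptic meromorphic solution `Φ` of `Φ‴ - 4IΦ′ - 2I′Φ = 0` vanishes identically. -/
theorem even_elliptic_solution_vanishes
    (τ : ℂ) (hτ : 0 < τ.im) (n : Fin 4 → ℂ) (A B p : ℂ)
    (zeta : ℂ → ℂ → ℂ) (hzeta : IsWeierstrassZeta zeta)
    (hp : ¬ InLattice τ (2 * p))
    (hn : ∃ i : Fin 4, ∀ m : ℤ, 2 * n i ≠ (m : ℂ))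
    (Φ : ℂ → ℂ)
    (hmero : ∀ z : ℂ, MeromorphicAt Φ z)
    (heven : ∀ z : ℂ, Φ (-z) = Φ z)
    (hper1 : ∀ z : ℂ, Φ (z + 1) = Φ z)
    (hper2 : ∀ z : ℂ, Φ (z + τ) = Φ z)
    (heq : ∀ z : ℂ, ¬ InLattice τ (z - p) → ¬ InLattice τ (z + p) →
      (∀ k : Fin 4, ¬ InLattice τ (z + halfp τ k / 2)) →
      AnalyticAt ℂ Φ z →
      deriv (deriv (deriv Φ)) z - 4 * Ipot n zeta A B p τ z * deriv Φ z
        - 2 * deriv (fun w => Ipot n zeta A B p τ w) z * Φ z = 0) :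
    ∀ z : ℂ, AnalyticAt ℂ Φ z → Φ z = 0 := by
  obtain ⟨i, hi⟩ := hn
  set z₀ := -(halfp τ i / 2) with hz₀
  have hsymm : ∀ z, Φ (2 * z₀ - z) = Φ z := by
    have hperiod : ∀ z, Φ (z + halfp τ i) = Φ z := by
      intro z
      fin_cases i
      · simp [halfp]
      · simpa [halfp] using hper1 z
      · simpa [halfp] using hper2 z
      · simpa [halfp, ← add_assoc, hper2] using hper1 z
    intro z
    rw [← heven, ← hperiod z]
    congr 1
    rw [hz₀]
    ring
  obtain ⟨a, b, hab⟩ := inLattice_halfp τ i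
  have hadd : ¬ InLattice τ (z₀ + p) := by
    rintro ⟨m, l, h⟩
    refine hp ⟨2 * m + a, 2 * l + b, ?_⟩
    push_cast
    linear_combination 2 * h + hab - 2 * hz₀
  have hsub : ¬ InLattice τ (z₀ - p) := by
    rintro ⟨m, l, h⟩
    refine hp ⟨-(2 * m + a), -(2 * l + b), ?_⟩
    push_cast
    linear_combination -2 * h - hab + 2 * hz₀
  have htop : meromorphicOrderAt Φ z₀ = ⊤ := by
    by_contra hfin
    obtain ⟨g, hg, hg₀, hΦ⟩ := (meromorphicOrderAt_ne_top_iff (hmero z₀)).1 hfin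
    simp only [smul_eq_mul] at hΦ
    set k := (meromorphicOrderAt Φ z₀).untop₀
    obtain ⟨h, hh, hh₀, hI⟩ := exists_analyticAt_Ipot_eq hτ n A B hzeta i hadd hsub
    have heq' : ∀ᶠ z in 𝓝[≠] z₀, deriv (deriv (deriv Φ)) z
        - 4 * Ipot n zeta A B p τ z * deriv Φ z
        - 2 * deriv (Ipot n zeta A B p τ) z * Φ z = 0 := by
      have htrans (c : ℂ) : ∀ᶠ z in 𝓝[≠] z₀, ¬ InLattice τ (z + c) := by
        refine Tendsto.eventually (f := fun z => z + c) ?_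
          (eventually_nhdsNE_not_inLattice hτ (z₀ + c))
        refine tendsto_nhdsWithin_iff.2 ⟨((continuous_add_const c).tendsto z₀).mono_left
          nhdsWithin_le_nhds, ?_⟩
        filter_upwards [self_mem_nhdsWithin] with z hz h
        exact hz (add_right_cancel h)
      filter_upwards [htrans p, htrans (-p), eventually_all.2 fun k => htrans (halfp τ k / 2),
        (hmero z₀).eventually_analyticAt] with z h1 h2 h3 h4
      exact heq z h2 h1 h3 h4
    have hind := indicial_eq_zero hg hg₀ hΦ hh hI heq'
    rw [hh₀] at hind
    have hfact : ((k : ℂ) - 1) * ((2 * n i + k) * (2 * n i - (k - 2))) = 0 := by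
      linear_combination -hind
    rcases mul_eq_zero.1 hfact with h1 | h1
    · have hk : k = 1 := by exact_mod_cast sub_eq_zero.1 h1
      have := even_of_symmetric_zpow_mul hg hg₀ hΦ hsymm
      simp [hk] at this
    · rcases mul_eq_zero.1 h1 with h2 | h2
      · exact hi (-k) (by push_cast; linear_combination h2)
      · exact hi (k - 2) (by push_cast; linear_combination h2)
  intro z hz
  have hz_top : meromorphicOrderAt Φ z = ⊤ := by
    by_contra hne
    exact (MeromorphicOn.meromorphicOrderAt_ne_top_of_isPreconnected (U := Set.univ)
      (fun w _ => hmero w) isPreconnected_univ (Set.mem_univ z) (Set.mem_univ z₀) hne) htop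
  exact hz.eq_zero_of_eventually_nhdsNE (meromorphicOrderAt_eq_top_iff.1 hz_top)
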